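/- arXiv:0707.1588 — 2 statements merged into one kernel-verified Lean document; each statement's English description precedes it below -/
import Mathlib

section
/- Let m > 0 and let M be a positive integer. For s > 0 define f_A(ξ; s) = f_γ((2^ξ − 1)/s) · 2^ξ ln 2 / ( s · F_γ((2^M − 1)/s) ) for 0 ≤ ξ ≤ M (the density of the conditional random variable A(s)). Then for every fixed ξ with 0 < ξ ≤ M, lim_{s → ∞} f_A(ξ; s) = m (2^ξ − 1)^{m−1} 2^ξ ln 2 / (2^M − 1)^m; in particular the limiting density is independent of s. -/
open MeasureTheory ProbabilityTheory Real Filter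

/-- Density of the Nakagami-m fading power gain (Gamma distribution, shape m, rate m). -/
noncomputable def fgamma (m x : ℝ) : ℝ :=
  if 0 ≤ x then m ^ m * x ^ (m - 1) * Real.exp (-(m * x)) / Real.Gamma m else 0

/-- The Nakagami-m fading power gain law μ_m. -/
noncomputable def muN (m : ℝ) : Measure ℝ :=
  MeasureTheory.volume.withDensity fun x => ENNReal.ofReal (fgamma m x)

/-- CDF of μ_m. -/
noncomputable def Fgamma (m x : ℝ) : ℝ := ∫ t in (0:ℝ)..x, fgamma m t

/-- Law of A(s) = log₂(1+γs) for γ ∼ μ_m conditioned on {γ ≤ (2^M-1)/s}. -/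
noncomputable def nuA (m : ℝ) (M : ℕ) (s : ℝ) : Measure ℝ :=
  Measure.map (fun x => Real.logb 2 (1 + x * s))
    ((muN m)[|{x : ℝ | x ≤ ((2:ℝ) ^ M - 1) / s}])


/-- The density of A(s). -/
noncomputable def fA (m : ℝ) (M : ℕ) (s ξ : ℝ) : ℝ :=
  if 0 ≤ ξ ∧ ξ ≤ (M : ℝ) then
    fgamma m (((2:ℝ) ^ ξ - 1) / s) * ((2:ℝ) ^ ξ * Real.log 2)
      / (s * Fgamma m (((2:ℝ) ^ M - 1) / s))
  else 0

/-!
At the origin the Gamma density is equivalent to `C * x ^ (m - 1)` with `C = m ^ m / Γ(m)`, and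
integrating this equivalence shows that its distribution function is equivalent to `C * x ^ m / m`.
As `s → ∞` the density of `A(s)` only involves both functions near the origin, and the constant `C`
and the powers of `s` cancel in their ratio.
-/

open Asymptotics
open scoped Topology

section IntegralAsymptotics

variable {E F : Type*} [NormedAddCommGroup E] [NormedSpace ℝ E] [NormedAddCommGroup F]
  {μ : Measure ℝ} {a : ℝ}

theorem eventually_intervalIntegrable_nhdsGT {f : ℝ → F} (hf : IntegrableAtFilter f (𝓝[>] a) μ) :
    ∀ᶠ x in 𝓝[>] a, IntervalIntegrable f μ a x := by
  obtain ⟨s, hs, hfs⟩ := hf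
  obtain ⟨b, hab, hbs⟩ := mem_nhdsGT_iff_exists_Ioc_subset.1 hs
  filter_upwards [Ioc_mem_nhdsGT hab] with x hx
  rw [intervalIntegrable_iff_integrableOn_Ioc_of_le hx.1.le]
  exact hfs.mono_set ((Set.Ioc_subset_Ioc_right hx.2).trans hbs)

theorem isLittleO_intervalIntegral_nhdsGT {f : ℝ → E} {g : ℝ → F} (hfg : f =o[𝓝[>] a] g)
    (hg : IntegrableAtFilter g (𝓝[>] a) μ) :
    (fun x ↦ ∫ t in a..x, f t ∂μ) =o[𝓝[>] a] fun x ↦ ∫ t in a..x, ‖g t‖ ∂μ := by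
  refine IsLittleO.of_bound fun ε hε ↦ ?_
  obtain ⟨b, hab, hb⟩ := mem_nhdsGT_iff_exists_Ioc_subset.1 (hfg.def hε)
  filter_upwards [Ioc_mem_nhdsGT hab, eventually_intervalIntegrable_nhdsGT hg] with x hx hgx
  calc ‖∫ t in a..x, f t ∂μ‖
      ≤ ∫ t in a..x, ε * ‖g t‖ ∂μ :=
        intervalIntegral.norm_integral_le_of_norm_le hx.1.le
          (.of_forall fun t ht ↦ hb ⟨ht.1, ht.2.trans hx.2⟩) (hgx.norm.const_mul ε)
    _ = ε * ∫ t in a..x, ‖g t‖ ∂μ := intervalIntegral.integral_const_mul ..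
    _ ≤ ε * ‖∫ t in a..x, ‖g t‖ ∂μ‖ := by gcongr; exact Real.le_norm_self _

theorem isEquivalent_intervalIntegral_nhdsGT {f g : ℝ → E} (hfg : f ~[𝓝[>] a] g)
    (hfm : StronglyMeasurableAtFilter f (𝓝[>] a) μ) (hg : IntegrableAtFilter g (𝓝[>] a) μ)
    (hg_norm : (fun x ↦ ∫ t in a..x, ‖g t‖ ∂μ) =O[𝓝[>] a] fun x ↦ ∫ t in a..x, g t ∂μ) :
    (fun x ↦ ∫ t in a..x, f t ∂μ) ~[𝓝[>] a] fun x ↦ ∫ t in a..x, g t ∂μ := by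
  have hf : IntegrableAtFilter f (𝓝[>] a) μ := hfg.isBigO.integrableAtFilter hfm hg
  refine ((isLittleO_intervalIntegral_nhdsGT hfg.isLittleO hg).trans_isBigO hg_norm).congr' ?_ .rfl
  filter_upwards [eventually_intervalIntegrable_nhdsGT hf,
    eventually_intervalIntegrable_nhdsGT hg] with x hfx hgx
  exact intervalIntegral.integral_sub hfx hgx

end IntegralAsymptotics

section PowerLaw

variable {f : ℝ → ℝ} {c p : ℝ}

theorem isEquivalent_intervalIntegral_of_isEquivalent_rpow (hp : 0 < p)
    (hfm : StronglyMeasurableAtFilter f (𝓝[>] 0))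
    (hf : f ~[𝓝[>] 0] fun x ↦ c * x ^ (p - 1)) :
    (fun x ↦ ∫ t in (0 : ℝ)..x, f t) ~[𝓝[>] 0] fun x ↦ c * (x ^ p / p) := by
  have integral_rpow_sub_one (k x : ℝ) :
      ∫ t in (0 : ℝ)..x, k * t ^ (p - 1) = k * (x ^ p / p) := by
    rw [intervalIntegral.integral_const_mul, integral_rpow (.inl (by linarith)), sub_add_cancel,
      zero_rpow hp.ne', sub_zero]
  have hg : IntegrableAtFilter (fun x ↦ c * x ^ (p - 1)) (𝓝[>] (0 : ℝ)) :=
    ⟨_, Ioc_mem_nhdsGT zero_lt_one,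
      ((intervalIntegral.intervalIntegrable_rpow' (by linarith)).const_mul c).1⟩
  have hg_norm : (fun x ↦ ∫ t in (0 : ℝ)..x, ‖c * t ^ (p - 1)‖) =O[𝓝[>] 0]
      fun x ↦ ∫ t in (0 : ℝ)..x, c * t ^ (p - 1) := by
    refine IsBigO.of_bound' ?_
    filter_upwards [self_mem_nhdsWithin] with x (hx : 0 < x)
    have h_congr : ∫ t in (0 : ℝ)..x, ‖c * t ^ (p - 1)‖ = ∫ t in (0 : ℝ)..x, ‖c‖ * t ^ (p - 1) := by
      refine intervalIntegral.integral_congr fun t ht ↦ ?_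
      rw [Set.uIcc_of_le hx.le] at ht
      simp only [norm_mul, norm_of_nonneg (rpow_nonneg ht.1 _)]
    rw [h_congr, integral_rpow_sub_one, integral_rpow_sub_one, norm_mul, norm_mul, norm_norm]
  simpa only [integral_rpow_sub_one] using isEquivalent_intervalIntegral_nhdsGT hf hfm hg hg_norm

theorem tendsto_const_div_atTop_nhdsGT_zero {b : ℝ} (hb : 0 < b) :
    Tendsto (fun s : ℝ ↦ b / s) atTop (𝓝[>] 0) :=
  tendsto_nhdsWithin_iff.2 ⟨tendsto_const_nhds.div_atTop tendsto_id,
    (eventually_gt_atTop 0).mono fun _ ↦ div_pos hb⟩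

-- If `X ≥ 0` has density `f`, the quotient is the density of `s * X` at `a` given `s * X ≤ b`.
theorem tendsto_div_mul_intervalIntegral_of_isEquivalent_rpow {a b : ℝ} (hc : c ≠ 0) (hp : 0 < p)
    (ha : 0 < a) (hb : 0 < b) (hfm : StronglyMeasurableAtFilter f (𝓝[>] 0))
    (hf : f ~[𝓝[>] 0] fun x ↦ c * x ^ (p - 1)) :
    Tendsto (fun s ↦ f (a / s) / (s * ∫ t in (0 : ℝ)..b / s, f t)) atTop
      (𝓝 (p * a ^ (p - 1) / b ^ p)) := by
  have h_num := hf.comp_tendsto (tendsto_const_div_atTop_nhdsGT_zero ha)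
  have h_den := (IsEquivalent.refl (u := fun s : ℝ ↦ s)).mul
    ((isEquivalent_intervalIntegral_of_isEquivalent_rpow hp hfm hf).comp_tendsto
      (tendsto_const_div_atTop_nhdsGT_zero hb))
  refine ((h_num.div h_den).congr_right ?_).tendsto_const
  filter_upwards [eventually_gt_atTop 0] with s hs
  have : 0 < b ^ p := rpow_pos_of_pos hb p
  have : 0 < s ^ p := rpow_pos_of_pos hs p
  simp only [Pi.div_apply, Pi.mul_apply, Function.comp_apply, Function.const_apply,
    div_rpow ha.le hs.le, div_rpow hb.le hs.le, rpow_sub_one hs.ne']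
  field_simp

end PowerLaw

theorem measurable_fgamma (m : ℝ) : Measurable (fgamma m) :=
  Measurable.ite measurableSet_Ici (by fun_prop) measurable_const

theorem fgamma_isEquivalent_rpow (m : ℝ) :
    fgamma m ~[𝓝[>] 0] fun x ↦ m ^ m / Gamma m * x ^ (m - 1) := by
  have h_exp : (fun x ↦ exp (-(m * x))) ~[𝓝[>] 0] Function.const ℝ 1 := by
    refine (isEquivalent_const_iff_tendsto one_ne_zero).2 ?_
    have : Continuous fun x ↦ exp (-(m * x)) := by fun_prop
    simpa using (this.tendsto 0).mono_left nhdsWithin_le_nhds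
  have h_mul := (IsEquivalent.refl (u := fun x ↦ m ^ m / Gamma m * x ^ (m - 1))).mul h_exp
  refine (h_mul.congr_left ?_).congr_right (.of_forall fun x ↦ mul_one _)
  filter_upwards [self_mem_nhdsWithin] with x (hx : 0 < x)
  simp only [Pi.mul_apply, fgamma, if_pos hx.le]
  ring

/-- pointwise limit of the density of A(s) as s → ∞. -/
theorem stmt_2 (m : ℝ) (hm : 0 < m) (M : ℕ) (hM : 0 < M)
    (ξ : ℝ) (hξ0 : 0 < ξ) (hξM : ξ ≤ (M : ℝ)) :
    Filter.Tendsto (fun s : ℝ => fA m M s ξ) Filter.atTop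
      (nhds (m * ((2:ℝ) ^ ξ - 1) ^ (m - 1) * (2:ℝ) ^ ξ * Real.log 2
        / ((2:ℝ) ^ M - 1) ^ m)) := by
  have hC : m ^ m / Gamma m ≠ 0 := (div_pos (rpow_pos_of_pos hm m) (Gamma_pos_of_pos hm)).ne'
  have ha : 0 < (2:ℝ) ^ ξ - 1 := sub_pos.2 (one_lt_rpow one_lt_two hξ0)
  have hb : 0 < (2:ℝ) ^ M - 1 := sub_pos.2 (one_lt_pow₀ one_lt_two hM.ne')
  have h_lim := tendsto_div_mul_intervalIntegral_of_isEquivalent_rpow hC hm ha hb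
    (measurable_fgamma m).stronglyMeasurable.stronglyMeasurableAtFilter (fgamma_isEquivalent_rpow m)
  convert h_lim.mul_const ((2:ℝ) ^ ξ * Real.log 2) using 2 with s
  · rw [fA, if_pos ⟨hξ0.le, hξM⟩, Fgamma, div_mul_eq_mul_div]
  · ring
end

section
/- Let m > 0 and let B be a positive integer. For s > 1 define f_α(a; s) = (m^m / Γ(m)) · s^{−m a} · exp(−m s^{−a}) · ln s (the density of the normalized fading gain α = −ln γ / ln s for γ ∼ μ_m), and define the joint density f_𝛂(a_1, …, a_B; s) = Π_{b=1}^B f_α(a_b; s). Then for every vector (a_1, …, a_B) with all coordinates strictly positive, lim_{s → ∞} log( f_𝛂(a_1, …, a_B; s) ) / log s = −m Σ_{b=1}^B a_b. -/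
open MeasureTheory ProbabilityTheory Real Filter

/-! The logarithm turns the joint density into a sum. In each factor the power `s ^ (-(m * a))`
contributes `-(m * a) * log s`, while the constant, the exponential (its argument stays bounded
because `s ^ (-a) ≤ 1`) and `log s` contribute only `o(log s)`. -/

/-- The exponential equality `f(s) ≐ s ^ d` of high-SNR analysis: `f` has power-law exponent `d` at
infinity, up to subpolynomial factors. Eventual nonvanishing is part of the definition, because
`Real.log 0 = 0` would let zeros of `f` pass for exponent `0`; the sign of `f` is ignored, as
`Real.log x = Real.log |x|`. -/
structure HasLogExponent (f : ℝ → ℝ) (d : ℝ) : Prop where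
  eventually_ne_zero : ∀ᶠ s in atTop, f s ≠ 0
  tendsto_log_div_log : Tendsto (fun s => log (f s) / log s) atTop (nhds d)

namespace HasLogExponent

theorem of_log_isLittleO {f : ℝ → ℝ} (hf : ∀ᶠ s in atTop, f s ≠ 0)
    (hlog : (fun s => log (f s)) =o[atTop] log) : HasLogExponent f 0 :=
  ⟨hf, hlog.tendsto_div_nhds_zero⟩

theorem const {c : ℝ} (hc : c ≠ 0) : HasLogExponent (fun _ => c) 0 :=
  of_log_isLittleO (.of_forall fun _ => hc) isLittleO_const_log_atTop

theorem log : HasLogExponent Real.log 0 :=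
  of_log_isLittleO (tendsto_log_atTop.eventually_ne_atTop 0)
    (isLittleO_log_id_atTop.comp_tendsto tendsto_log_atTop)

theorem exp_of_isLittleO {g : ℝ → ℝ} (hg : g =o[atTop] Real.log) :
    HasLogExponent (fun s => exp (g s)) 0 :=
  of_log_isLittleO (.of_forall fun s => exp_ne_zero (g s)) (by simpa only [log_exp] using hg)

theorem rpow (d : ℝ) : HasLogExponent (fun s => s ^ d) d where
  eventually_ne_zero := by
    filter_upwards [eventually_gt_atTop 0] with s hs using (rpow_pos_of_pos hs d).ne'
  tendsto_log_div_log := by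
    refine tendsto_const_nhds.congr' ?_
    filter_upwards [eventually_gt_atTop 1] with s hs
    rw [log_rpow (one_pos.trans hs), mul_div_cancel_right₀ d (log_pos hs).ne']

theorem mul {f g : ℝ → ℝ} {d e : ℝ} (hf : HasLogExponent f d) (hg : HasLogExponent g e) :
    HasLogExponent (fun s => f s * g s) (d + e) where
  eventually_ne_zero := by
    filter_upwards [hf.eventually_ne_zero, hg.eventually_ne_zero] with s using mul_ne_zero
  tendsto_log_div_log := by
    refine (hf.tendsto_log_div_log.add hg.tendsto_log_div_log).congr' ?_
    filter_upwards [hf.eventually_ne_zero, hg.eventually_ne_zero] with s hfs hgs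
    rw [log_mul hfs hgs, add_div]

theorem prod {ι : Type*} {t : Finset ι} {f : ι → ℝ → ℝ} {d : ι → ℝ}
    (hf : ∀ i ∈ t, HasLogExponent (f i) (d i)) :
    HasLogExponent (fun s => ∏ i ∈ t, f i s) (∑ i ∈ t, d i) := by
  induction t using Finset.cons_induction with
  | empty => simpa only [Finset.prod_empty, Finset.sum_empty] using const one_ne_zero
  | cons i t hi ih =>
    simp only [Finset.prod_cons, Finset.sum_cons]
    exact (hf i (t.mem_cons_self i)).mul (ih fun j hj => hf j (Finset.mem_cons_of_mem hj))

end HasLogExponent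

theorem rpow_isBigO_one_of_nonpos {p : ℝ} (hp : p ≤ 0) :
    (fun s : ℝ => s ^ p) =O[atTop] fun _ => (1 : ℝ) := by
  refine .of_bound 1 ?_
  filter_upwards [eventually_ge_atTop 1] with s hs
  rw [norm_one, mul_one, norm_of_nonneg (by positivity)]
  exact rpow_le_one_of_one_le_of_nonpos hs hp

/-- The density `f_α(a; s)` of the normalized fading gain `α = -log γ / log s` at SNR `s`, for a
Nakagami-`m` power gain `γ`, in closed form. -/
noncomputable def normalizedGainDensity (m a s : ℝ) : ℝ :=
  m ^ m / Gamma m * s ^ (-(m * a)) * exp (-(m * s ^ (-a))) * log s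

theorem hasLogExponent_normalizedGainDensity {m a : ℝ} (hm : 0 < m) (ha : 0 ≤ a) :
    HasLogExponent (normalizedGainDensity m a) (-(m * a)) := by
  have hconst : m ^ m / Gamma m ≠ 0 := (div_pos (rpow_pos_of_pos hm m) (Gamma_pos_of_pos hm)).ne'
  have hexp : (fun s : ℝ => -(m * s ^ (-a))) =o[atTop] log :=
    ((rpow_isBigO_one_of_nonpos (neg_nonpos.mpr ha)).const_mul_left m).neg_left.trans_isLittleO
      isLittleO_const_log_atTop
  have hprod :=
    (((HasLogExponent.const hconst).mul (.rpow (-(m * a)))).mul (.exp_of_isLittleO hexp)).mul .log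
  simp only [zero_add, add_zero] at hprod
  exact hprod

theorem stmt_9_general {ι : Type*} (t : Finset ι) (m a : ι → ℝ)
    (hm : ∀ b ∈ t, 0 < m b) (ha : ∀ b ∈ t, 0 ≤ a b) :
    Tendsto (fun s => log (∏ b ∈ t, normalizedGainDensity (m b) (a b) s) / log s) atTop
      (nhds (-∑ b ∈ t, m b * a b)) := by
  rw [← Finset.sum_neg_distrib]
  exact (HasLogExponent.prod fun b hb =>
    hasLogExponent_normalizedGainDensity (hm b hb) (ha b hb)).tendsto_log_div_log

/-- asymptotic SNR exponent of the joint density of the normalized fading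
gains: log f_𝛂(a; s) / log s → -m Σ_b a_b for strictly positive a. -/
theorem stmt_9 (m : ℝ) (hm : 0 < m) (B : ℕ) (hB : 0 < B)
    (a : Fin B → ℝ) (ha : ∀ b, 0 < a b) :
    Filter.Tendsto (fun s : ℝ =>
        Real.log (∏ b, (m ^ m / Real.Gamma m * s ^ (-(m * a b))
          * Real.exp (-(m * s ^ (-(a b)))) * Real.log s)) / Real.log s)
      Filter.atTop (nhds (-(m * ∑ b, a b))) := by
  rw [Finset.mul_sum]
  exact stmt_9_general Finset.univ (fun _ => m) a (fun _ _ => hm) fun b _ => (ha b).le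
end
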